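/- Let 𝙿, 𝚀 ≪_loc 𝚪 be sequential laws, let s ∈ ℕ, and let h be an ℱ_s-measurable random variable with values in [0,1] satisfying 𝚪(h < 1 and Z_s^𝚀 = 0) = 0, and let 𝚁 be the (s,h)-fork-convex combination of 𝙿 with 𝚀. If a nonnegative adapted process {M_t} is a nonnegative supermartingale for both 𝙿 and 𝚀, then {M_t} is a nonnegative supermartingale for 𝚁; if {M_t} is a nonnegative martingale for both 𝙿 and 𝚀, then it is a nonnegative martingale for 𝚁. -/

import Mathlib

open MeasureTheory ProbabilityTheory Filter Finset Matrix
open scoped Classical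

noncomputable section

namespace SeqTest

/-- `ℝ^d`. -/
abbrev RV (d : ℕ) := Fin d → ℝ

/-- The sequence space `Ω = (ℝ^d)^ℕ`. -/
abbrev Seq (d : ℕ) := ℕ → RV d

variable (d : ℕ)


/-- The first `t` coordinates of a sequence. -/
def prefixMap (t : ℕ) : Seq d → (Fin t → RV d) := fun ω s => ω s

/-- The law of the first `t` coordinates under a sequential law `μ`. -/
def prefixLaw (μ : Measure (Seq d)) (t : ℕ) : Measure (Fin t → RV d) :=
  μ.map (prefixMap d t)

/-- The natural filtration of the coordinate process: `ℱ t = σ(X_0, …, X_{t-1})`. -/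
def F : Filtration ℕ (inferInstance : MeasurableSpace (Seq d)) where
  seq t := ⨆ s ∈ Finset.range t, MeasurableSpace.comap (fun ω : Seq d => ω s) inferInstance
  mono' := by
    intro i j hij
    exact biSup_mono fun s hs => Finset.mem_range.mpr
      (lt_of_lt_of_le (Finset.mem_range.mp hs) hij)
  le' := by
    intro t
    refine iSup₂_le fun s _ => ?_
    exact measurable_iff_comap_le.mp (measurable_pi_apply s)

/-- Local absolute continuity of sequential laws: every prefix law of `μ` is
absolutely continuous w.r.t. the corresponding prefix law of `Γ`. -/
def LocAC (μ Γ : Measure (Seq d)) : Prop := ∀ t, prefixLaw d μ t ≪ prefixLaw d Γ t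

/-- The density (likelihood-ratio) process `Z_t^μ = d(μ|_t)/d(Γ|_t)` evaluated along the path. -/
def Z (μ Γ : Measure (Seq d)) (t : ℕ) (ω : Seq d) : ℝ :=
  ((prefixLaw d μ t).rnDeriv (prefixLaw d Γ t) (prefixMap d t ω)).toReal

/-- The standard Gaussian measure on `ℝ^d`. -/
def stdGaussian : Measure (RV d) := Measure.pi fun _ => gaussianReal 0 1

/-- `Γ` is the law of an i.i.d. sequence of standard Gaussians: characterized through its
finite-dimensional rectangle probabilities. -/
def IsGamma (Γ : Measure (Seq d)) : Prop :=
  IsProbabilityMeasure Γ ∧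
    ∀ (t : ℕ) (A : Fin t → Set (RV d)), (∀ s, MeasurableSet (A s)) →
      prefixLaw d Γ t (Set.univ.pi A) = ∏ s, stdGaussian d (A s)

/-- `M` is a nonnegative supermartingale for the sequential law `μ`
(w.r.t. the natural filtration). -/
def IsNSM (μ : Measure (Seq d)) (M : ℕ → Seq d → ℝ) : Prop :=
  (∀ t ω, 0 ≤ M t ω) ∧ Supermartingale M (F d) μ

/-- `M` is a nonnegative martingale for the sequential law `μ`. -/
def IsNM (μ : Measure (Seq d)) (M : ℕ → Seq d → ℝ) : Prop :=
  (∀ t ω, 0 ≤ M t ω) ∧ Martingale M (F d) μ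


/-- `R` is the `(s,h)`-fork-convex combination of `P` with `Q` (relative to the
reference law `Γ`), described through its density process. -/
def IsFCC (Γ P Q : Measure (Seq d)) (s : ℕ) (h : Seq d → ℝ) (R : Measure (Seq d)) : Prop :=
  IsProbabilityMeasure P ∧ IsProbabilityMeasure Q ∧ LocAC d P Γ ∧ LocAC d Q Γ ∧
  Measurable[F d s] h ∧ (∀ ω, h ω ∈ Set.Icc (0 : ℝ) 1) ∧
  Γ {ω | h ω < 1 ∧ Z d Q Γ s ω = 0} = 0 ∧
  IsProbabilityMeasure R ∧ LocAC d R Γ ∧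
  ∀ t : ℕ, (fun ω => Z d R Γ t ω) =ᵐ[Γ]
    (fun ω => if t ≤ s then Z d P Γ t ω
      else h ω * Z d P Γ t ω + (1 - h ω) * Z d Q Γ t ω * (Z d P Γ s ω / Z d Q Γ s ω))

/-- A set of sequential laws is fork-convex if it is closed under fork-convex combinations. -/
def IsForkConvex (Γ : Measure (Seq d)) (S : Set (Measure (Seq d))) : Prop :=
  ∀ P ∈ S, ∀ Q ∈ S, ∀ (s : ℕ) (h : Seq d → ℝ) (R : Measure (Seq d)),
    IsFCC d Γ P Q s h R → R ∈ S

/-- The fork-convex hull: the smallest fork-convex set containing `𝔓`. -/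
def fconv (Γ : Measure (Seq d)) (𝔓 : Set (Measure (Seq d))) : Set (Measure (Seq d)) :=
  ⋂₀ {S | 𝔓 ⊆ S ∧ IsForkConvex d Γ S}

/-- Convergence of sequential laws: the density processes converge in `L¹(Γ)` at every fixed time. -/
def TendstoLocL1 (Γ : Measure (Seq d)) (Pn : ℕ → Measure (Seq d)) (P : Measure (Seq d)) : Prop :=
  ∀ t, Tendsto (fun n => ∫ ω, |Z d (Pn n) Γ t ω - Z d P Γ t ω| ∂Γ) atTop (nhds 0)

/-- The closed fork-convex hull: the closure of the fork-convex hull under local `L¹(Γ)`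
convergence of density processes. -/
def clfconv (Γ : Measure (Seq d)) (𝔓 : Set (Measure (Seq d))) : Set (Measure (Seq d)) :=
  {P | IsProbabilityMeasure P ∧ LocAC d P Γ ∧
    ∃ Pn : ℕ → Measure (Seq d), (∀ n, Pn n ∈ fconv d Γ 𝔓) ∧ TendstoLocL1 d Γ Pn P}

/-- `μ` is the law of an i.i.d. sequence with marginal `P`. -/
def IsIIDLaw (μ : Measure (Seq d)) (P : Measure (RV d)) : Prop :=
  IsProbabilityMeasure μ ∧
    ∀ (t : ℕ) (A : Fin t → Set (RV d)), (∀ s, MeasurableSet (A s)) →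
      prefixLaw d μ t (Set.univ.pi A) = ∏ s, P (A s)

/-- `μ` is the law of an independent sequence with marginals `Ps 0, Ps 1, …`. -/
def IsProductLaw (μ : Measure (Seq d)) (Ps : ℕ → Measure (RV d)) : Prop :=
  IsProbabilityMeasure μ ∧
    ∀ (t : ℕ) (A : Fin t → Set (RV d)), (∀ s, MeasurableSet (A s)) →
      prefixLaw d μ t (Set.univ.pi A) = ∏ s : Fin t, Ps s (A s)

/-- The set of i.i.d. sequential laws with marginals in `PP`. -/
def iidLaws (PP : Set (Measure (RV d))) : Set (Measure (Seq d)) :=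
  {μ | ∃ P ∈ PP, IsIIDLaw d μ P}

/-- The set of independent-product sequential laws with all marginals in `PP`. -/
def productLaws (PP : Set (Measure (RV d))) : Set (Measure (Seq d)) :=
  {μ | ∃ Ps : ℕ → Measure (RV d), (∀ t, Ps t ∈ PP) ∧ IsProductLaw d μ Ps}




/-- The density of the `d`-dimensional Gaussian with mean `m` and covariance matrix `S`. -/
def gaussDensityFn (m : RV d) (S : Matrix (Fin d) (Fin d) ℝ) (x : RV d) : ℝ :=
  (2 * Real.pi) ^ (-(d : ℝ) / 2) * S.det ^ (-(1 : ℝ) / 2) *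
    Real.exp (-(1 / 2) * ((x - m) ⬝ᵥ (S⁻¹ *ᵥ (x - m))))

/-- A finite mixture of nondegenerate Gaussian densities. -/
def IsGaussianMixture (g : RV d → ℝ) : Prop :=
  ∃ (k : ℕ) (α : Fin k → ℝ) (ms : Fin k → RV d) (Ss : Fin k → Matrix (Fin d) (Fin d) ℝ),
    (∀ i, 0 ≤ α i) ∧ (∑ i, α i = 1) ∧ (∀ i, (Ss i).PosDef) ∧
    g = fun x => ∑ i, α i * gaussDensityFn d (ms i) (Ss i) x

/-- A log-concave nonnegative function on `ℝ^d`. -/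
def IsLogConcaveFn (p : RV d → ℝ) : Prop :=
  (∀ x, 0 ≤ p x) ∧
    ∀ (x y : RV d) (l : ℝ), 0 ≤ l → l ≤ 1 →
      p x ^ l * p y ^ (1 - l) ≤ p (l • x + (1 - l) • y)

/-- A log-concave probability density on `ℝ^d`. -/
def IsLogConcaveDensity (p : RV d → ℝ) : Prop :=
  Measurable p ∧ IsLogConcaveFn d p ∧ ∫ x, p x = 1

/-- The set `𝓛` of laws on `ℝ^d` with a log-concave Lebesgue density. -/
def logConcaveLaws : Set (Measure (RV d)) :=
  {P | IsProbabilityMeasure P ∧ ∃ p : RV d → ℝ, Measurable p ∧ IsLogConcaveFn d p ∧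
    P = volume.withDensity fun x => ENNReal.ofReal (p x)}

/-- The set `𝒢` of nondegenerate Gaussian laws on `ℝ^d`. -/
def gaussianLaws : Set (Measure (RV d)) :=
  {P | ∃ (m : RV d) (S : Matrix (Fin d) (Fin d) ℝ), S.PosDef ∧
    P = volume.withDensity fun x => ENNReal.ofReal (gaussDensityFn d m S x)}

/-- An estimator sequence: a measurable family of (strictly positive) predictable
probability density estimates. -/
def IsEstimatorSeq (E : (t : ℕ) → (Fin t → RV d) → RV d → ℝ) : Prop :=
  (∀ t, Measurable fun q : (Fin t → RV d) × RV d => E t q.1 q.2) ∧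
  (∀ t h x, 0 < E t h x) ∧ (∀ t h, ∫ x, E t h x = 1)

/-- The universal likelihood ratio (ULR) process. Time `t` corresponds to having observed
the `t` samples `ω 0, …, ω (t-1)`. -/
def ULR (E : (t : ℕ) → (Fin t → RV d) → RV d → ℝ) (t : ℕ) (ω : Seq d) : ℝ :=
  if t ≤ d then 1 else
    (∏ j ∈ Finset.Ico d t, E j (fun i : Fin j => ω i) (ω j)) /
      ⨆ p : {p : RV d → ℝ // IsLogConcaveDensity d p}, ∏ j ∈ Finset.Ico d t, p.1 (ω j)

/-- The prediction (cumulative log-loss) regret of the estimator sequence `E` relative to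
the density of `P`. -/
def regret (P : Measure (RV d)) (E : (t : ℕ) → (Fin t → RV d) → RV d → ℝ)
    (t : ℕ) (ω : Seq d) : ℝ :=
  ∑ j ∈ Finset.range t,
    (Real.log ((P.rnDeriv volume (ω j)).toReal) - Real.log (E j (fun i : Fin j => ω i) (ω j)))

/-- The Hellinger distance between two laws on `ℝ^d` (via their Lebesgue densities). -/
def hellinger (P Q : Measure (RV d)) : ℝ :=
  Real.sqrt ((1 / 2) *
    ∫ x, (Real.sqrt ((P.rnDeriv volume x).toReal) - Real.sqrt ((Q.rnDeriv volume x).toReal)) ^ 2)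

/-- The Hellinger distance from `P` to the class of log-concave laws. -/
def dHLC (P : Measure (RV d)) : ℝ :=
  sInf {r | ∃ L ∈ logConcaveLaws d, r = hellinger d P L}

/-- The Kullback–Leibler divergence. -/
def klDivR {α : Type*} [MeasurableSpace α] (P Q : Measure α) : EReal :=
  if P ≪ Q ∧ Integrable (fun x => Real.log ((P.rnDeriv Q x).toReal)) P
  then ((∫ x, Real.log ((P.rnDeriv Q x).toReal) ∂P : ℝ) : EReal) else ⊤

/-- Membership in `𝒟₁`. -/
def MemD1 (P : Measure (RV d)) : Prop :=
  IsProbabilityMeasure P ∧ P ≪ volume ∧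
  Integrable (fun x => max 0 (Real.log ((P.rnDeriv volume x).toReal))) P ∧
  Integrable (fun x => Real.sqrt (∑ i, (x i) ^ 2)) P

/-- The log-likelihood gap `σ_t(P)` between the true density and the log-concave maximum
likelihood. -/
def sigmaT (P : Measure (RV d)) (t : ℕ) (ω : Seq d) : ℝ :=
  (∑ j ∈ Finset.range t, Real.log ((P.rnDeriv volume (ω j)).toReal)) -
    ⨆ p : {p : RV d → ℝ // IsLogConcaveDensity d p},
      ∑ j ∈ Finset.range t, Real.log (p.1 (ω j))

/-- The mean vector of `P`. -/
def meanVec (P : Measure (RV d)) : RV d := fun i => ∫ x, x i ∂P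

/-- `Δ_P = min_{‖v‖=1} E_P |⟨v, X − E_P X⟩|`. -/
def DeltaP (P : Measure (RV d)) : ℝ :=
  sInf {r | ∃ v : RV d, (∑ i, (v i) ^ 2) = 1 ∧
    r = ∫ x, |∑ i, v i * (x i - meanVec d P i)| ∂P}

/-- The class `𝒟_{Box,Lip,B}`: laws with a `1`-Lipschitz density supported on `[-1,1]^d`
taking values in `[1/B, B]` there. -/
def DBoxLip (B : ℝ) : Set (Measure (RV d)) :=
  {P | IsProbabilityMeasure P ∧ ∃ p : RV d → ℝ, Measurable p ∧
    P = volume.withDensity (fun x => ENNReal.ofReal (p x)) ∧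
    (∀ x, ¬ (∀ i, |x i| ≤ 1) → p x = 0) ∧
    (∀ x, (∀ i, |x i| ≤ 1) → 1 / B ≤ p x ∧ p x ≤ B) ∧
    (∀ x y, (∀ i, |x i| ≤ 1) → (∀ i, |y i| ≤ 1) →
      |p x - p y| ≤ Real.sqrt (∑ i, (x i - y i) ^ 2))}

/-!
A nonnegative adapted process `M` with `M 0` integrable is a supermartingale for `μ` as soon as, for
every `t`, the measure `A ↦ E_μ[M (t + 1); A]` on `ℱ t` is at most `A ↦ E_μ[M t; A]`, and a
martingale if the two are equal; integrability at later times follows by induction. If, up to time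
`t + 1`, the law `R` is `w • P + v • Q` with `ℱ t`-measurable densities `w` and `v`, then these
measures for `R` are the corresponding combinations of those for `P` and `Q`, so that both `≤` and
`=` pass to `R`. For a fork-convex combination `w = 1` and `v = 0` up to the fork, and `w = h` and
`v = (1 - h) * Z_s^P / Z_s^Q` after it.
-/

open scoped ENNReal

section TrimWithDensity

variable {Ω : Type*} {m m₀ : MeasurableSpace Ω} {μ ν : Measure Ω} {f g : Ω → ℝ}

/-- The measure `A ↦ ∫⁻ ω in A, f ω ∂μ` on the sub-σ-algebra `m`. It stands in for the conditional
expectation of `f` given `m`, but makes sense without any integrability of `f`. -/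
def trimWithDensity (hm : m ≤ m₀) (μ : Measure[m₀] Ω) (f : Ω → ℝ≥0∞) : Measure[m] Ω :=
  (μ.withDensity f).trim hm

lemma withDensity_mono_measure (hμν : μ ≤ ν) (f : Ω → ℝ≥0∞) :
    μ.withDensity f ≤ ν.withDensity f := by
  refine Measure.le_iff.mpr fun A hA => ?_
  rw [withDensity_apply _ hA, withDensity_apply _ hA]
  exact lintegral_mono' (Measure.restrict_mono_measure hμν A) le_rfl

lemma trim_withDensity (hm : m ≤ m₀) (μ : Measure[m₀] Ω) {w : Ω → ℝ≥0∞} (hw : Measurable[m] w) :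
    (μ.withDensity w).trim hm = (μ.trim hm).withDensity w := by
  refine @Measure.ext _ m _ _ fun A hA => ?_
  rw [trim_measurableSet_eq hm hA, withDensity_apply _ (hm A hA), withDensity_apply _ hA,
    restrict_trim hm μ hA, lintegral_trim hm hw]

lemma trimWithDensity_withDensity (hm : m ≤ m₀) (μ : Measure[m₀] Ω) {w a : Ω → ℝ≥0∞}
    (hw : Measurable[m] w) (ha : Measurable a) :
    trimWithDensity hm (μ.withDensity w) a = (trimWithDensity hm μ a).withDensity w := by
  have hw₀ : Measurable w := hw.mono hm le_rfl
  simp only [trimWithDensity]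
  rw [← trim_withDensity hm _ hw, ← withDensity_mul _ hw₀ ha, ← withDensity_mul _ ha hw₀, mul_comm]

lemma trimWithDensity_add_measure (hm : m ≤ m₀) (μ ν : Measure[m₀] Ω) (a : Ω → ℝ≥0∞) :
    trimWithDensity hm (μ + ν) a = trimWithDensity hm μ a + trimWithDensity hm ν a := by
  simp only [trimWithDensity, withDensity_add_measure, trim_add]

lemma trimWithDensity_congr_of_trim_eq {m' : MeasurableSpace Ω} (hm : m ≤ m') (hm' : m' ≤ m₀)
    {μ ν : Measure[m₀] Ω} (hμν : μ.trim hm' = ν.trim hm') {a : Ω → ℝ≥0∞} (ha : Measurable[m'] a) :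
    trimWithDensity (hm.trans hm') μ a = trimWithDensity (hm.trans hm') ν a := by
  simp only [trimWithDensity, ← trim_trim (hm₁₂ := hm) (hm₂ := hm'), trim_withDensity hm' _ ha, hμν]

lemma trimWithDensity_ofReal_apply (hm : m ≤ m₀) (hf : Integrable f μ) (hf₀ : 0 ≤ f) {A : Set Ω}
    (hA : MeasurableSet[m] A) :
    trimWithDensity hm μ (fun ω => ENNReal.ofReal (f ω)) A =
      ENNReal.ofReal (∫ ω in A, f ω ∂μ) := by
  rw [trimWithDensity, trim_measurableSet_eq hm hA, withDensity_apply _ (hm A hA),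
    ofReal_integral_eq_lintegral_ofReal hf.integrableOn (ae_of_all _ hf₀)]

lemma trimWithDensity_ofReal_le_iff (hm : m ≤ m₀) (hf : Integrable f μ) (hg : Integrable g μ)
    (hf₀ : 0 ≤ f) (hg₀ : 0 ≤ g) :
    trimWithDensity hm μ (fun ω => ENNReal.ofReal (f ω)) ≤
        trimWithDensity hm μ (fun ω => ENNReal.ofReal (g ω)) ↔
      ∀ A, MeasurableSet[m] A → ∫ ω in A, f ω ∂μ ≤ ∫ ω in A, g ω ∂μ := by
  rw [Measure.le_iff]
  refine forall₂_congr fun A hA => ?_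
  rw [trimWithDensity_ofReal_apply hm hf hf₀ hA, trimWithDensity_ofReal_apply hm hg hg₀ hA,
    ENNReal.ofReal_le_ofReal_iff (integral_nonneg hg₀)]

lemma integrable_of_trimWithDensity_ofReal_le (hm : m ≤ m₀) (hf : AEStronglyMeasurable f μ)
    (hf₀ : 0 ≤ f) (hg : Integrable g μ)
    (hle : trimWithDensity hm μ (fun ω => ENNReal.ofReal (f ω)) ≤
      trimWithDensity hm μ (fun ω => ENNReal.ofReal (g ω))) :
    Integrable f μ := by
  rw [← lintegral_ofReal_ne_top_iff_integrable hf (ae_of_all _ hf₀)]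
  have htotal : ∫⁻ ω, ENNReal.ofReal (f ω) ∂μ ≤ ∫⁻ ω, ENNReal.ofReal (g ω) ∂μ := by
    simpa only [trimWithDensity, trim_measurableSet_eq hm MeasurableSet.univ,
      withDensity_apply _ MeasurableSet.univ, Measure.restrict_univ] using hle Set.univ
  exact (htotal.trans_lt hg.lintegral_lt_top).ne

end TrimWithDensity

section FilteredSpace

variable {Ω : Type*} {m₀ : MeasurableSpace Ω} {ℱ : Filtration ℕ m₀} {μ P Q R : Measure Ω}
  {M : ℕ → Ω → ℝ}

lemma measurable_ofReal_of_stronglyAdapted (hadp : StronglyAdapted ℱ M) {s t : ℕ} (hst : s ≤ t) :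
    Measurable[ℱ t] fun ω => ENNReal.ofReal (M s ω) :=
  ((hadp s).mono (ℱ.mono hst)).measurable.ennreal_ofReal

lemma supermartingale_iff_trimWithDensity_le [IsFiniteMeasure μ] (hM : 0 ≤ M) :
    Supermartingale M ℱ μ ↔ StronglyAdapted ℱ M ∧ Integrable (M 0) μ ∧
      ∀ t, trimWithDensity (ℱ.le t) μ (fun ω => ENNReal.ofReal (M (t + 1) ω)) ≤
        trimWithDensity (ℱ.le t) μ (fun ω => ENNReal.ofReal (M t ω)) := by
  constructor
  · intro h
    exact ⟨h.stronglyAdapted, h.integrable 0, fun t =>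
      (trimWithDensity_ofReal_le_iff _ (h.integrable _) (h.integrable _) (hM _) (hM _)).mpr
        fun _ hA => h.setIntegral_le t.le_succ hA⟩
  · rintro ⟨hadp, hint₀, hle⟩
    have hint : ∀ t, Integrable (M t) μ := by
      intro t
      induction t with
      | zero => exact hint₀
      | succ t ih =>
        exact integrable_of_trimWithDensity_ofReal_le _
          ((hadp _).mono (ℱ.le _)).aestronglyMeasurable (hM _) ih (hle t)
    exact supermartingale_of_setIntegral_succ_le hadp hint fun t =>
      (trimWithDensity_ofReal_le_iff _ (hint _) (hint _) (hM _) (hM _)).mp (hle t)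

lemma martingale_iff_trimWithDensity_eq [IsFiniteMeasure μ] (hM : 0 ≤ M) :
    Martingale M ℱ μ ↔ StronglyAdapted ℱ M ∧ Integrable (M 0) μ ∧
      ∀ t, trimWithDensity (ℱ.le t) μ (fun ω => ENNReal.ofReal (M (t + 1) ω)) =
        trimWithDensity (ℱ.le t) μ (fun ω => ENNReal.ofReal (M t ω)) := by
  constructor
  · intro h
    obtain ⟨hadp, hint₀, hle⟩ := (supermartingale_iff_trimWithDensity_le hM).mp h.supermartingale
    refine ⟨hadp, hint₀, fun t => (hle t).antisymm ?_⟩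
    rw [trimWithDensity_ofReal_le_iff _ (h.integrable _) (h.integrable _) (hM _) (hM _)]
    exact fun _ hA => (h.setIntegral_eq t.le_succ hA).le
  · rintro ⟨hadp, hint₀, heq⟩
    have hsuper : Supermartingale M ℱ μ :=
      (supermartingale_iff_trimWithDensity_le hM).mpr ⟨hadp, hint₀, fun t => (heq t).le⟩
    have hint := hsuper.integrable
    refine martingale_of_setIntegral_eq_succ hadp hint fun t A hA => ?_
    refine le_antisymm ?_ (hsuper.setIntegral_le t.le_succ hA)
    exact (trimWithDensity_ofReal_le_iff _ (hint _) (hint _) (hM _) (hM _)).mp (heq t).ge A hA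

/-- `R` is a predictable mixture of `P` and `Q`: it agrees with `P` at time `0`, and up to time
`t + 1` it is a combination of `P` and `Q` with nonnegative weights known at time `t`. The weights
need not sum to one, since they also carry the densities of `R` relative to `P` and `Q` accumulated
up to time `t`. -/
structure IsPredictableMixture (ℱ : Filtration ℕ m₀) (P Q R : Measure Ω) : Prop where
  trim_zero : R.trim (ℱ.le 0) = P.trim (ℱ.le 0)
  exists_weights : ∀ t, ∃ w v : Ω → ℝ≥0∞, Measurable[ℱ t] w ∧ Measurable[ℱ t] v ∧
    R.trim (ℱ.le (t + 1)) = (P.withDensity w + Q.withDensity v).trim (ℱ.le (t + 1))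

namespace IsPredictableMixture

lemma integrable_zero (hR : IsPredictableMixture ℱ P Q R) {f : Ω → ℝ}
    (hf : StronglyMeasurable[ℱ 0] f) (hfP : Integrable f P) : Integrable f R :=
  integrable_of_integrable_trim (ℱ.le 0) (hR.trim_zero ▸ hfP.trim (ℱ.le 0) hf)

lemma exists_trimWithDensity_eq (hR : IsPredictableMixture ℱ P Q R) (t : ℕ) :
    ∃ w v : Ω → ℝ≥0∞, ∀ a, Measurable[ℱ (t + 1)] a →
      trimWithDensity (ℱ.le t) R a =
        (trimWithDensity (ℱ.le t) P a).withDensity w +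
          (trimWithDensity (ℱ.le t) Q a).withDensity v := by
  obtain ⟨w, v, hw, hv, htrim⟩ := hR.exists_weights t
  refine ⟨w, v, fun a ha => ?_⟩
  have ha₀ : Measurable a := ha.mono (ℱ.le _) le_rfl
  rw [trimWithDensity_congr_of_trim_eq (ℱ.mono t.le_succ) (ℱ.le (t + 1)) htrim ha,
    trimWithDensity_add_measure, trimWithDensity_withDensity _ _ hw ha₀,
    trimWithDensity_withDensity _ _ hv ha₀]

lemma trimWithDensity_le (hR : IsPredictableMixture ℱ P Q R) {t : ℕ} {a b : Ω → ℝ≥0∞}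
    (ha : Measurable[ℱ (t + 1)] a) (hb : Measurable[ℱ (t + 1)] b)
    (hP : trimWithDensity (ℱ.le t) P a ≤ trimWithDensity (ℱ.le t) P b)
    (hQ : trimWithDensity (ℱ.le t) Q a ≤ trimWithDensity (ℱ.le t) Q b) :
    trimWithDensity (ℱ.le t) R a ≤ trimWithDensity (ℱ.le t) R b := by
  obtain ⟨w, v, hmix⟩ := hR.exists_trimWithDensity_eq t
  rw [hmix a ha, hmix b hb]
  exact add_le_add (withDensity_mono_measure hP w) (withDensity_mono_measure hQ v)

variable [IsFiniteMeasure P] [IsFiniteMeasure Q] [IsFiniteMeasure R]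

theorem supermartingale (hR : IsPredictableMixture ℱ P Q R) (hM : 0 ≤ M)
    (hP : Supermartingale M ℱ P) (hQ : Supermartingale M ℱ Q) : Supermartingale M ℱ R := by
  rw [supermartingale_iff_trimWithDensity_le hM] at hP hQ ⊢
  obtain ⟨hadp, hint₀, hPle⟩ := hP
  obtain ⟨-, -, hQle⟩ := hQ
  exact ⟨hadp, hR.integrable_zero (hadp 0) hint₀, fun t => hR.trimWithDensity_le
    (measurable_ofReal_of_stronglyAdapted hadp le_rfl)
    (measurable_ofReal_of_stronglyAdapted hadp t.le_succ) (hPle t) (hQle t)⟩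

theorem martingale (hR : IsPredictableMixture ℱ P Q R) (hM : 0 ≤ M)
    (hP : Martingale M ℱ P) (hQ : Martingale M ℱ Q) : Martingale M ℱ R := by
  rw [martingale_iff_trimWithDensity_eq hM] at hP hQ ⊢
  obtain ⟨hadp, hint₀, hPeq⟩ := hP
  obtain ⟨-, -, hQeq⟩ := hQ
  refine ⟨hadp, hR.integrable_zero (hadp 0) hint₀, fun t => ?_⟩
  have hsucc := measurable_ofReal_of_stronglyAdapted hadp (le_refl (t + 1))
  have hcur := measurable_ofReal_of_stronglyAdapted hadp t.le_succ
  exact le_antisymm (hR.trimWithDensity_le hsucc hcur (hPeq t).le (hQeq t).le)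
    (hR.trimWithDensity_le hcur hsucc (hPeq t).ge (hQeq t).ge)

end IsPredictableMixture

end FilteredSpace

lemma trim_eq_withDensity_rnDeriv_map {α β : Type*} {m mα : MeasurableSpace α}
    {mβ : MeasurableSpace β} {μ ν : Measure[mα] α} {f : α → β} (hm : m ≤ mα)
    (hmf : m = mβ.comap f) [(μ.map f).HaveLebesgueDecomposition (ν.map f)]
    (hμν : μ.map f ≪ ν.map f) :
    μ.trim hm = (ν.withDensity fun x => (μ.map f).rnDeriv (ν.map f) (f x)).trim hm := by
  subst hmf
  have hf : Measurable f := measurable_iff_comap_le.mpr hm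
  refine @Measure.ext _ (mβ.comap f) _ _ ?_
  rintro _ ⟨B, hB, rfl⟩
  calc μ.trim hm (f ⁻¹' B) = μ.map f B := trim_comap_apply hf hB
    _ = ∫⁻ y in B, (μ.map f).rnDeriv (ν.map f) y ∂(ν.map f) := by
      rw [← withDensity_apply _ hB, Measure.withDensity_rnDeriv_eq _ _ hμν]
    _ = ∫⁻ x in f ⁻¹' B, (μ.map f).rnDeriv (ν.map f) (f x) ∂ν :=
      setLIntegral_map hB (Measure.measurable_rnDeriv _ _) hf
    _ = (ν.withDensity fun x => (μ.map f).rnDeriv (ν.map f) (f x)).trim hm (f ⁻¹' B) := by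
      rw [trim_measurableSet_eq hm ⟨B, hB, rfl⟩, withDensity_apply _ (hf hB)]

section DensityProcess

variable {d} {μ Γ : Measure (Seq d)}

lemma measurable_prefixMap (t : ℕ) : Measurable (prefixMap d t) :=
  measurable_pi_lambda _ fun _ => measurable_pi_apply _

lemma F_eq_comap_prefixMap (t : ℕ) :
    F d t = MeasurableSpace.pi.comap (prefixMap d t) := by
  unfold prefixMap
  rw [MeasurableSpace.comap_process_pi]
  exact le_antisymm
    (iSup₂_le fun i hi => le_iSup_of_le (⟨i, Finset.mem_range.mp hi⟩ : Fin t) le_rfl)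
    (iSup_le fun i => le_iSup₂_of_le (i : ℕ) (Finset.mem_range.mpr i.2) le_rfl)

lemma measurable_Z (μ Γ : Measure (Seq d)) (t : ℕ) : Measurable[F d t] (Z d μ Γ t) := by
  rw [F_eq_comap_prefixMap]
  exact (Measure.measurable_rnDeriv _ _).ennreal_toReal.comp (comap_measurable (prefixMap d t))

lemma Z_nonneg (μ Γ : Measure (Seq d)) (t : ℕ) (ω : Seq d) : 0 ≤ Z d μ Γ t ω :=
  ENNReal.toReal_nonneg

lemma ofReal_Z_ae_eq [IsFiniteMeasure μ] (t : ℕ) :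
    (fun ω => ENNReal.ofReal (Z d μ Γ t ω)) =ᵐ[Γ]
      fun ω => (prefixLaw d μ t).rnDeriv (prefixLaw d Γ t) (prefixMap d t ω) := by
  have : IsFiniteMeasure (prefixLaw d μ t) := by unfold prefixLaw; infer_instance
  have hfin : ∀ᵐ ω ∂Γ, (prefixLaw d μ t).rnDeriv (prefixLaw d Γ t) (prefixMap d t ω) ≠ ∞ :=
    ae_of_ae_map (measurable_prefixMap t).aemeasurable (Measure.rnDeriv_ne_top _ _)
  filter_upwards [hfin] with ω hω using ENNReal.ofReal_toReal hω

lemma LocAC.trim_eq_withDensity_Z [IsFiniteMeasure μ] [IsFiniteMeasure Γ] (hμ : LocAC d μ Γ)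
    (t : ℕ) :
    μ.trim ((F d).le t) =
      (Γ.withDensity fun ω => ENNReal.ofReal (Z d μ Γ t ω)).trim ((F d).le t) := by
  rw [withDensity_congr_ae (ofReal_Z_ae_eq t)]
  have : SigmaFinite (Γ.map (prefixMap d t)) := inferInstance
  exact trim_eq_withDensity_rnDeriv_map _ (F_eq_comap_prefixMap t) (hμ t)

lemma LocAC.trim_withDensity_eq [IsFiniteMeasure μ] [IsFiniteMeasure Γ] (hμ : LocAC d μ Γ) {t : ℕ}
    {w : Seq d → ℝ≥0∞} (hw : Measurable[F d t] w) :
    (μ.withDensity w).trim ((F d).le t) =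
      (Γ.withDensity fun ω => w ω * ENNReal.ofReal (Z d μ Γ t ω)).trim ((F d).le t) := by
  have hw₀ : Measurable w := hw.mono ((F d).le t) le_rfl
  have hZ₀ : Measurable fun ω => ENNReal.ofReal (Z d μ Γ t ω) :=
    ((measurable_Z μ Γ t).mono ((F d).le t) le_rfl).ennreal_ofReal
  rw [trim_withDensity _ _ hw, hμ.trim_eq_withDensity_Z t, ← trim_withDensity _ _ hw,
    ← withDensity_mul _ hZ₀ hw₀, mul_comm]
  rfl

end DensityProcess

section ForkConvex

variable {d} {Γ P Q R : Measure (Seq d)} {s t : ℕ} {h : Seq d → ℝ}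

/-- The weight `(1 - h) * Z_s^P / Z_s^Q` that a fork-convex combination of `P` with `Q` puts on `Q`
after the fork. -/
def forkWeight (Γ P Q : Measure (Seq d)) (s : ℕ) (h : Seq d → ℝ) (ω : Seq d) : ℝ :=
  (1 - h ω) * (Z d P Γ s ω / Z d Q Γ s ω)

lemma measurable_forkWeight (hh : Measurable[F d s] h) :
    Measurable[F d s] (forkWeight Γ P Q s h) :=
  (measurable_const.sub hh).mul ((measurable_Z P Γ s).div (measurable_Z Q Γ s))

lemma forkWeight_nonneg {ω : Seq d} (hω : h ω ≤ 1) : 0 ≤ forkWeight Γ P Q s h ω :=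
  mul_nonneg (sub_nonneg.mpr hω) (div_nonneg (Z_nonneg P Γ s ω) (Z_nonneg Q Γ s ω))

lemma IsFCC.trim_eq_of_le [IsFiniteMeasure Γ] (hR : IsFCC d Γ P Q s h R) (hts : t ≤ s) :
    R.trim ((F d).le t) = P.trim ((F d).le t) := by
  obtain ⟨_, _, hP, _, _, _, _, _, hRΓ, hZ⟩ := hR
  rw [hRΓ.trim_eq_withDensity_Z, hP.trim_eq_withDensity_Z]
  congr 1
  refine withDensity_congr_ae ?_
  filter_upwards [hZ t] with ω hω
  rw [hω, if_pos hts]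

lemma IsFCC.ofReal_Z_ae_eq_of_lt (hR : IsFCC d Γ P Q s h R) (hst : s < t) :
    (fun ω => ENNReal.ofReal (Z d R Γ t ω)) =ᵐ[Γ] fun ω =>
      ENNReal.ofReal (h ω) * ENNReal.ofReal (Z d P Γ t ω) +
        ENNReal.ofReal (forkWeight Γ P Q s h ω) * ENNReal.ofReal (Z d Q Γ t ω) := by
  obtain ⟨_, _, _, _, _, h01, _, _, _, hZ⟩ := hR
  filter_upwards [hZ t] with ω hω
  have hh₀ : 0 ≤ h ω := (h01 ω).1
  have hv₀ : 0 ≤ forkWeight Γ P Q s h ω := forkWeight_nonneg (h01 ω).2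
  have hsplit : Z d R Γ t ω = h ω * Z d P Γ t ω + forkWeight Γ P Q s h ω * Z d Q Γ t ω := by
    rw [hω, if_neg hst.not_ge, forkWeight]
    ring
  rw [hsplit, ENNReal.ofReal_add (mul_nonneg hh₀ (Z_nonneg P Γ t ω))
    (mul_nonneg hv₀ (Z_nonneg Q Γ t ω)), ENNReal.ofReal_mul hh₀, ENNReal.ofReal_mul hv₀]

lemma IsFCC.trim_eq_of_lt [IsFiniteMeasure Γ] (hR : IsFCC d Γ P Q s h R) (hst : s < t) :
    R.trim ((F d).le t) = (P.withDensity (fun ω => ENNReal.ofReal (h ω)) +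
      Q.withDensity fun ω => ENNReal.ofReal (forkWeight Γ P Q s h ω)).trim ((F d).le t) := by
  have hdens := hR.ofReal_Z_ae_eq_of_lt hst
  obtain ⟨_, _, hP, hQ, hh, _, _, _, hRΓ, _⟩ := hR
  have hmono : F d s ≤ F d t := (F d).mono hst.le
  have hw : Measurable[F d t] fun ω => ENNReal.ofReal (h ω) := (hh.mono hmono le_rfl).ennreal_ofReal
  have hv : Measurable[F d t] fun ω => ENNReal.ofReal (forkWeight Γ P Q s h ω) :=
    ((measurable_forkWeight hh).mono hmono le_rfl).ennreal_ofReal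
  have hwZ : Measurable fun ω => ENNReal.ofReal (h ω) * ENNReal.ofReal (Z d P Γ t ω) :=
    (hw.mul (measurable_Z P Γ t).ennreal_ofReal).mono ((F d).le t) le_rfl
  rw [hRΓ.trim_eq_withDensity_Z, withDensity_congr_ae hdens, trim_add, hP.trim_withDensity_eq hw,
    hQ.trim_withDensity_eq hv, ← trim_add, ← withDensity_add_left hwZ]
  rfl

theorem IsFCC.isPredictableMixture [IsFiniteMeasure Γ] (hR : IsFCC d Γ P Q s h R) :
    IsPredictableMixture (F d) P Q R where
  trim_zero := hR.trim_eq_of_le s.zero_le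
  exists_weights t := by
    rcases le_or_gt (t + 1) s with hts | hst
    · refine ⟨1, 0, measurable_const, measurable_const, ?_⟩
      rw [withDensity_one, withDensity_zero, add_zero, hR.trim_eq_of_le hts]
    · have hmono : F d s ≤ F d t := (F d).mono (Nat.lt_succ_iff.mp hst)
      have hh : Measurable[F d s] h := hR.2.2.2.2.1
      exact ⟨_, _, (hh.mono hmono le_rfl).ennreal_ofReal,
        ((measurable_forkWeight hh).mono hmono le_rfl).ennreal_ofReal, hR.trim_eq_of_lt hst⟩

end ForkConvex

theorem statement1_general (Γ P Q R : Measure (Seq d)) [IsFiniteMeasure Γ]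
    (s : ℕ) (h : Seq d → ℝ) (hFCC : IsFCC d Γ P Q s h R) (M : ℕ → Seq d → ℝ) :
    (IsNSM d P M → IsNSM d Q M → IsNSM d R M) ∧
    (IsNM d P M → IsNM d Q M → IsNM d R M) := by
  have hmix := hFCC.isPredictableMixture
  obtain ⟨_, _, _, _, _, _, _, _, _, _⟩ := hFCC
  exact ⟨fun ⟨hM, hP⟩ ⟨_, hQ⟩ => ⟨hM, hmix.supermartingale hM hP hQ⟩,
    fun ⟨hM, hP⟩ ⟨_, hQ⟩ => ⟨hM, hmix.martingale hM hP hQ⟩⟩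

/-- Fork-convex combinations preserve the nonnegative supermartingale and
nonnegative martingale properties. -/
theorem statement1 (Γ P Q R : Measure (Seq d)) (hΓ : IsGamma d Γ)
    (s : ℕ) (h : Seq d → ℝ) (hFCC : IsFCC d Γ P Q s h R) (M : ℕ → Seq d → ℝ) :
    (IsNSM d P M → IsNSM d Q M → IsNSM d R M) ∧
    (IsNM d P M → IsNM d Q M → IsNM d R M) := by
  have := hΓ.1
  exact statement1_general d Γ P Q R s h hFCC M

end SeqTest
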